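/- Suppose along a curve γ the variable τ is monotone decreasing and bounded in absolute value by T₀ > 0, the curve decomposes into finitely many segments on each of which τ has the explicit form τ(s) = √σcos(s − s₀) for some σ ≥ 0 in a fixed finite set Λ of size C₁, with s restricted to a subinterval of (s₀, s₀+π) when σ > 0 and with zero-length projection when σ = 0. Then the total arclength of γ is at most C₁π. -/

import Mathlib

open Real Set Finset

theorem sum_len_aux {k : ℕ} (u v : Fin k → ℝ) (S : Finset (Fin k)) :
    (∀ i ∈ S, 0 ≤ u i) → (∀ i ∈ S, ∀ j ∈ S, i < j → v i ≤ u j) →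
    ∀ B : ℝ, 0 ≤ B → (∀ i ∈ S, v i ≤ B) → ∑ i ∈ S, (v i - u i) ≤ B := by
  induction S using Finset.induction_on_max with
  | empty => intro _ _ B hB _; simpa using hB
  | insert m S hm ih =>
    intro h0 h1 B hB hv
    rw [Finset.sum_insert (fun h => lt_irrefl _ (hm m h))]
    have := ih (fun i hi => h0 i (Finset.mem_insert_of_mem hi))
      (fun i hi j hj => h1 i (Finset.mem_insert_of_mem hi) j (Finset.mem_insert_of_mem hj))
      (u m) (h0 m (Finset.mem_insert_self _ _))
      (fun i hi => h1 i (Finset.mem_insert_of_mem hi) m (Finset.mem_insert_self _ _) (hm i hi))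
    have := hv m (Finset.mem_insert_self _ _)
    linarith

/-- Arclength bound for broken bicharacteristics with kinetic energies in a finite set `Λ` of
cardinality `C₁`: the curve decomposes into segments `[a_j, b_j]` on which
`τ(s) = √σ_j cos(s − s₀_j)`, with `[a_j,b_j] ⊂ (s₀_j, s₀_j + π)` if `σ_j > 0` and zero-length
projection if `σ_j = 0`; if `τ` is monotone decreasing along the whole curve, the total
arclength is at most `C₁·π`. -/
theorem stmt11 (C₁ k : ℕ) (Λ : Finset ℝ) (hcard : Λ.card = C₁)
    (σ s₀ a b : Fin k → ℝ) (hσΛ : ∀ j, σ j ∈ Λ) (hσnn : ∀ j, 0 ≤ σ j)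
    (hseg : ∀ j, 0 < σ j → s₀ j < a j ∧ a j ≤ b j ∧ b j < s₀ j + Real.pi)
    (hzero : ∀ j, σ j = 0 → a j = b j)
    (hmono : ∀ i j : Fin k, i < j →
      Real.sqrt (σ j) * Real.cos (a j - s₀ j) ≤ Real.sqrt (σ i) * Real.cos (b i - s₀ i)) :
    ∑ j, (b j - a j) ≤ (C₁ : ℝ) * Real.pi := by
  classical
  rw [← Finset.sum_fiberwise_of_maps_to (s := Finset.univ) (t := Λ) (g := σ)
    (fun j _ => hσΛ j), ← hcard, ← nsmul_eq_mul]
  refine Finset.sum_le_card_nsmul _ _ _ ?_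
  intro c _
  by_cases hc : 0 < c
  · have h := sum_len_aux (fun j => a j - s₀ j) (fun j => b j - s₀ j)
      (Finset.univ.filter (fun j => σ j = c)) ?_ ?_ Real.pi Real.pi_pos.le ?_
    · simpa using h
    · intro i hi
      have hi : σ i = c := by simpa using hi
      have := hseg i (hi ▸ hc)
      linarith
    · intro i hi j hj hij
      have hi : σ i = c := by simpa using hi
      have hj : σ j = c := by simpa using hj
      obtain ⟨p1, p2, p3⟩ := hseg i (hi ▸ hc)
      obtain ⟨q1, q2, q3⟩ := hseg j (hj ▸ hc)
      have hm := hmono i j hij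
      rw [hi, hj] at hm
      have hm := le_of_mul_le_mul_left hm (Real.sqrt_pos.2 hc)
      by_contra! hlt
      have := Real.cos_lt_cos_of_nonneg_of_le_pi (x := a j - s₀ j) (y := b i - s₀ i)
        (by linarith) (by linarith) hlt
      linarith
    · intro i hi
      have hi : σ i = c := by simpa using hi
      have := hseg i (hi ▸ hc)
      linarith
  · refine (Finset.sum_nonpos ?_).trans Real.pi_pos.le
    intro j hj
    have hj : σ j = c := by simpa using hj
    have := hzero j (le_antisymm (by linarith) (hσnn j))
    linarith
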